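/- If κ is an α-Mahlo cardinal and β < α is an ordinal, then the set of cardinals δ < κ that are β-Mahlo but not (β+1)-Mahlo is stationary in κ. -/

import Mathlib

/-- `C` is a closed unbounded (club) subset of the ordinal `κ`: it is a set of
ordinals below `κ`, unbounded in `κ`, and contains every `δ < κ` that is a
limit point of `C`. -/
def IsClubIn (C : Set Ordinal) (κ : Ordinal) : Prop :=
  C ⊆ Set.Iio κ ∧
  (∀ θ < κ, ∃ γ ∈ C, θ < γ) ∧
  (∀ δ, 0 < δ → δ < κ → (∀ θ < δ, ∃ γ ∈ C, θ < γ ∧ γ < δ) → δ ∈ C)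

/-- `S` is stationary in the ordinal `κ`: it meets every club subset of `κ`. -/
def IsStationaryIn (S : Set Ordinal) (κ : Ordinal) : Prop :=
  ∀ C : Set Ordinal, IsClubIn C κ → (S ∩ C).Nonempty

/-- A cardinal `κ` is Mahlo if the set of inaccessible cardinals below `κ`
is stationary in `κ`. -/
def IsMahlo (κ : Cardinal) : Prop :=
  IsStationaryIn {γ | ∃ μ : Cardinal, μ.IsInaccessible ∧ μ.ord = γ} κ.ord

/-- `κ` is `α`-Mahlo: `κ` is Mahlo and, for every `β < α`, the set of `β`-Mahlo
cardinals below `κ` is stationary in `κ`.  Defined by recursion on `α`. -/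
def AlphaMahlo (α : Ordinal) (κ : Cardinal) : Prop :=
  IsMahlo κ ∧
    ∀ β < α,
      IsStationaryIn {γ | ∃ μ : Cardinal, AlphaMahlo β μ ∧ μ.ord = γ} κ.ord
termination_by α

theorem lim_club {μ : Cardinal} (h : IsMahlo μ) (C : Set Ordinal)
    (hC : ∀ θ < μ.ord, ∃ γ ∈ C, θ < γ ∧ γ < μ.ord) :
    IsClubIn {γ | γ < μ.ord ∧ 0 < γ ∧ ∀ θ < γ, ∃ c ∈ C, θ < c ∧ c < γ} μ.ord := by
  have hs : ∀ θ < μ.ord, Order.succ θ < μ.ord := by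
    intro θ hθ
    obtain ⟨γ, _, h1, h2⟩ := hC θ hθ
    exact (Order.succ_le_of_lt h1).trans_lt h2
  refine ⟨fun γ hγ => hγ.1, ?_, ?_⟩
  · intro θ hθ
    by_contra hcon
    push Not at hcon
    have hclub : IsClubIn {x | ∃ c ∈ C, θ < c ∧ c < μ.ord ∧ x = Order.succ c} μ.ord := by
      refine ⟨?_, ?_, ?_⟩
      · rintro x ⟨c, _, _, h2, rfl⟩
        exact hs c h2
      · intro η hη
        obtain ⟨c, hc, h1, h2⟩ := hC (max θ η) (max_lt hθ hη)
        exact ⟨_, ⟨c, hc, (le_max_left _ _).trans_lt h1, h2, rfl⟩,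
          ((le_max_right _ _).trans_lt h1).trans (Order.lt_succ c)⟩
      · intro δ h0 hδ hlim
        exfalso
        have hm : δ ≤ θ := by
          refine hcon δ ⟨hδ, h0, ?_⟩
          intro η hη
          obtain ⟨y, ⟨c, hc, _, _, rfl⟩, h1, h2⟩ := hlim η hη
          obtain ⟨z, ⟨d, hd, _, _, rfl⟩, h3, h4⟩ := hlim _ h2
          exact ⟨d, hd, h1.trans_le (Order.lt_succ_iff.1 h3), (Order.lt_succ d).trans h4⟩
        obtain ⟨y, ⟨c, hc, h5, _, rfl⟩, h1, h2⟩ := hlim 0 h0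
        exact absurd ((h5.trans (Order.lt_succ c)).trans h2) hm.not_gt
    obtain ⟨x, ⟨ν, hν, rfl⟩, c, _, _, _, hx⟩ := h _ hclub
    have hl := Cardinal.isSuccLimit_ord hν.aleph0_lt.le
    have := hl.succ_lt (a := c) (by rw [hx]; exact Order.lt_succ c)
    rw [hx] at this
    exact lt_irrefl _ this
  · intro δ h0 hδ hlim
    refine ⟨hδ, h0, fun θ hθ => ?_⟩
    obtain ⟨γ, ⟨_, _, hγ⟩, h1, h2⟩ := hlim θ hθ
    obtain ⟨c, hc, h3, h4⟩ := hγ θ h1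
    exact ⟨c, hc, h3, h4.trans h2⟩

/-- If `κ` is an `α`-Mahlo cardinal and `β < α`, then the set of cardinals
below `κ` that are `β`-Mahlo but not `(β+1)`-Mahlo is stationary in `κ`. -/
theorem stationary_exactly_beta_mahlo {κ : Cardinal} {α β : Ordinal}
    (h : AlphaMahlo α κ) (hβ : β < α) :
    IsStationaryIn
      {γ | ∃ μ : Cardinal, AlphaMahlo β μ ∧ ¬ AlphaMahlo (β + 1) μ ∧ μ.ord = γ}
      κ.ord := by
  intro C hC
  rw [AlphaMahlo] at h
  have hL := lim_club h.1 C (fun θ hθ => by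
    obtain ⟨γ, hγ, h1⟩ := hC.2.1 θ hθ
    exact ⟨γ, hγ, h1, hC.1 hγ⟩)
  have hne := h.2 β hβ _ hL
  obtain ⟨δ, ⟨⟨μ, hμ, rfl⟩, hδL⟩, hmin⟩ := WellFounded.has_min
    (wellFounded_lt (α := Ordinal)) _ hne
  refine ⟨μ.ord, ⟨μ, hμ, ?_, rfl⟩, hC.2.2 _ hδL.2.1 hδL.1 hδL.2.2⟩
  intro hs
  rw [AlphaMahlo] at hs
  obtain ⟨x, hx, hxL⟩ := hs.2 β (Order.lt_add_one_iff.2 le_rfl) _ (lim_club hs.1 C hδL.2.2)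
  exact hmin x ⟨hx, hxL.1.trans hδL.1, hxL.2⟩ hxL.1
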